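/- For q̈ : Ω_δ×Ω_δ → ℝ measurable with ‖q̈‖_{L^{1,2}(Ω_δ×Ω_δ)} < ∞, define the recovered local flux R_δ q̈(x) := ∫_{Ω_δ} (x − x') q̈(x,x') ω_δ(x − x') dx' ∈ ℝⁿ. Then R_δ q̈(x) is well defined for a.e. x ∈ Ω_δ, R_δ q̈ ∈ L¹(Ω_δ;ℝⁿ), and ∫_{Ω_δ} |R_δ q̈(x)| dx ≤ ‖q̈‖_{L^{1,2}(Ω_δ×Ω_δ)}. That is, R_δ is a bounded linear operator from L^{1,2}(Ω_δ×Ω_δ) to L¹(Ω_δ;ℝⁿ) with operator norm at most 1. -/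

import Mathlib

/-!
Pairing `R_δ q̈(x)` with the unit vector `v` parallel to it and applying the Cauchy–Schwarz inequality
in `x'` bounds `‖R_δ q̈(x)‖` by `(∫ q̈(x,x')² dx')^{1/2}` times `(∫ ⟪z, v⟫² ω(z)² dz)^{1/2}`, and
integrating in `x` gives the claim as soon as the last factor is at most `1`. This is where the
normalization of the kernel enters: for radial `ω`, polar coordinates factor both
`∫ ⟪z, e⟫² ω² = A · I` and `∫ ‖z‖² ω² = |𝕊^{n-1}| · I` with the same radial integral `I`, where
`A = ∫ (s·e)² ds` over the unit sphere and so `A / |𝕊^{n-1}| = K_{2,n}`; hence the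
first equals `K_{2,n}` times the second (`lintegral_inner_sq_le_one`); a reflection carries `e` to any
other unit vector. Estimating `‖z‖² ω²` directly would lose a factor `√n`.
-/

open MeasureTheory ENNReal Metric Filter
open scoped Topology RealInnerProductSpace

noncomputable section

/-- `Ω` has a Lipschitz boundary: near each boundary point, in a suitable direction `v`,
`Ω` coincides with the strict subgraph of a Lipschitz function that is constant in the
direction `v`. -/
def HasLipschitzBoundary {n : ℕ} (Ω : Set (EuclideanSpace ℝ (Fin n))) : Prop :=
  ∀ x ∈ frontier Ω, ∃ r : ℝ, 0 < r ∧ ∃ v : EuclideanSpace ℝ (Fin n), ‖v‖ = 1 ∧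
    ∃ (L : NNReal) (f : EuclideanSpace ℝ (Fin n) → ℝ), LipschitzWith L f ∧
      (∀ y, f y = f (y - ⟪y, v⟫ • v)) ∧
      (∀ y ∈ Metric.ball x r, (y ∈ Ω ↔ ⟪y, v⟫ < f (y - ⟪y, v⟫ • v)))

/-- The constant `K_{2,n} = |𝕊^{n-1}|⁻¹ ∫_{𝕊^{n-1}} (s·e)² ds`, the average of `(s·e)²`
over the unit sphere, computed with respect to the surface measure `volume.toSphere`. -/
def K2 (n : ℕ) (e : EuclideanSpace ℝ (Fin n)) : ℝ≥0∞ :=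
  (∫⁻ s : sphere (0 : EuclideanSpace ℝ (Fin n)) 1,
      ENNReal.ofReal (⟪(s : EuclideanSpace ℝ (Fin n)), e⟫ ^ 2)
    ∂(volume : Measure (EuclideanSpace ℝ (Fin n))).toSphere) /
  ((volume : Measure (EuclideanSpace ℝ (Fin n))).toSphere Set.univ)

/-- The interaction kernel `ω_δ`: measurable, nonnegative, radial, supported in `B(0,δ)`,
and normalized so that `∫ |z|² ω_δ(z)² dz = K_{2,n}⁻¹` (with `e` a unit vector). -/
structure IsKernel (n : ℕ) (δ : ℝ) (e : EuclideanSpace ℝ (Fin n))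
    (ω : EuclideanSpace ℝ (Fin n) → ℝ) : Prop where
  meas : Measurable ω
  nonneg : ∀ z, 0 ≤ ω z
  radial : ∀ z z', ‖z‖ = ‖z'‖ → ω z = ω z'
  supp : ∀ z, δ ≤ ‖z‖ → ω z = 0
  norm : (∫⁻ z, ENNReal.ofReal (‖z‖ ^ 2 * ω z ^ 2)) = (K2 n e)⁻¹

/-- The nonlocal two-point gradient `Ĝ_δ u (x,x') = (u(x) − u(x')) ω_δ(x − x')`. -/
def nlGrad {n : ℕ} (ω : EuclideanSpace ℝ (Fin n) → ℝ) (u : EuclideanSpace ℝ (Fin n) → ℝ)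
    (x x' : EuclideanSpace ℝ (Fin n)) : ℝ :=
  (u x - u x') * ω (x - x')

/-- The mixed `L^{1,2}` norm of a two-point function on `D × D`, with values in `[0,∞]`. -/
def N12 {n : ℕ} (D : Set (EuclideanSpace ℝ (Fin n)))
    (q : EuclideanSpace ℝ (Fin n) → EuclideanSpace ℝ (Fin n) → ℝ) : ℝ≥0∞ :=
  ∫⁻ x in D, (∫⁻ x' in D, ENNReal.ofReal (q x x' ^ 2)) ^ (1/2 : ℝ)

/-- The mixed `L^{∞,2}` norm of a two-point function on `D × D`, with values in `[0,∞]`. -/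
def Ninf2 {n : ℕ} (D : Set (EuclideanSpace ℝ (Fin n)))
    (q : EuclideanSpace ℝ (Fin n) → EuclideanSpace ℝ (Fin n) → ℝ) : ℝ≥0∞ :=
  essSup (fun x => (∫⁻ x' in D, ENNReal.ofReal (q x x' ^ 2)) ^ (1/2 : ℝ))
    (volume.restrict D)

/-- The squared `L²` norm of a two-point function on `D × D`, with values in `[0,∞]`. -/
def L2sq {n : ℕ} (D : Set (EuclideanSpace ℝ (Fin n)))
    (q : EuclideanSpace ℝ (Fin n) → EuclideanSpace ℝ (Fin n) → ℝ) : ℝ≥0∞ :=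
  ∫⁻ x in D, ∫⁻ x' in D, ENNReal.ofReal (q x x' ^ 2)

/-- The flux recovery operator `R_δ q̈ (x) = ∫_{Ω_δ} (x − x') q̈(x,x') ω_δ(x − x') dx'`. -/
def Rdelta {n : ℕ} (D : Set (EuclideanSpace ℝ (Fin n)))
    (ω : EuclideanSpace ℝ (Fin n) → ℝ)
    (q : EuclideanSpace ℝ (Fin n) → EuclideanSpace ℝ (Fin n) → ℝ)
    (x : EuclideanSpace ℝ (Fin n)) : EuclideanSpace ℝ (Fin n) :=
  ∫ x' in D, (q x x' * ω (x - x')) • (x - x')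

/-- Polar coordinates for functions that split into an angular and a radial factor. -/
lemma lintegral_polar_mul {n : ℕ}
    (F : EuclideanSpace ℝ (Fin n) → ℝ≥0∞)
    (f : sphere (0 : EuclideanSpace ℝ (Fin n)) 1 → ℝ≥0∞) (g : Set.Ioi (0 : ℝ) → ℝ≥0∞)
    (hn : 0 < n) (hf : Measurable f) (hg : Measurable g)
    (h : ∀ z : ({0}ᶜ : Set (EuclideanSpace ℝ (Fin n))),
      F z = f (homeomorphUnitSphereProd _ z).1 * g (homeomorphUnitSphereProd _ z).2) :
    ∫⁻ z, F z = (∫⁻ s, f s ∂(volume : Measure (EuclideanSpace ℝ (Fin n))).toSphere) *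
      ∫⁻ r, g r ∂(Measure.volumeIoiPow (Module.finrank ℝ (EuclideanSpace ℝ (Fin n)) - 1)) := by
  have : Nontrivial (EuclideanSpace ℝ (Fin n)) :=
    Module.nontrivial_of_finrank_pos (R := ℝ) (by simpa using hn)
  rw [← lintegral_prod_mul hf.aemeasurable hg.aemeasurable,
    ← (Measure.measurePreserving_homeomorphUnitSphereProd
      (volume : Measure (EuclideanSpace ℝ (Fin n)))).lintegral_comp_emb
      (Homeomorph.measurableEmbedding _)]
  simp_rw [← h]
  rw [lintegral_subtype_comap (measurableSet_singleton _).compl, restrict_compl_singleton]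

/-- For the normalized kernel, `∫ ⟪z, v⟫² ω(z)² dz ≤ 1` for every unit vector `v`. -/
lemma lintegral_inner_sq_le_one {n : ℕ} (hn : 2 ≤ n) {δ : ℝ} {e : EuclideanSpace ℝ (Fin n)}
    (he : ‖e‖ = 1) {ω : EuclideanSpace ℝ (Fin n) → ℝ} (hω : IsKernel n δ e ω)
    (v : EuclideanSpace ℝ (Fin n)) (hv : ‖v‖ = 1) :
    ∫⁻ z, ENNReal.ofReal (⟪z, v⟫ ^ 2 * ω z ^ 2) ≤ 1 := by
  have : Nontrivial (EuclideanSpace ℝ (Fin n)) :=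
    Module.nontrivial_of_finrank_pos (R := ℝ) (by simp; omega)
  have hωm := hω.meas
  have hrot : ∫⁻ z, ENNReal.ofReal (⟪z, v⟫ ^ 2 * ω z ^ 2) =
      ∫⁻ z, ENNReal.ofReal (⟪z, e⟫ ^ 2 * ω z ^ 2) := by
    obtain ⟨T, hT⟩ : ∃ T : EuclideanSpace ℝ (Fin n) ≃ₗᵢ[ℝ] EuclideanSpace ℝ (Fin n), T e = v :=
      ⟨_, Submodule.reflection_sub (he.trans hv.symm)⟩
    rw [← T.measurePreserving.lintegral_comp_emb T.toHomeomorph.measurableEmbedding]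
    refine lintegral_congr fun z => ?_
    rw [← hT, T.inner_map_map, hω.radial (T z) z (T.norm_map z)]
  set g : Set.Ioi (0 : ℝ) → ℝ≥0∞ := fun r => ENNReal.ofReal (r.1 ^ 2 * ω (r.1 • e) ^ 2) with hg
  have hgm : Measurable g := by
    have : Measurable fun r : Set.Ioi (0 : ℝ) => ω (r.1 • e) :=
      hωm.comp (measurable_subtype_coe.smul_const e)
    fun_prop
  have hrad (z : EuclideanSpace ℝ (Fin n)) : ω (‖z‖ • e) = ω z :=
    hω.radial _ _ (by simp [norm_smul, he])
  have h1 := lintegral_polar_mul (fun z => ENNReal.ofReal (⟪z, e⟫ ^ 2 * ω z ^ 2))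
    (fun s => ENNReal.ofReal (⟪(s : EuclideanSpace ℝ (Fin n)), e⟫ ^ 2)) g (by omega)
    (by fun_prop) hgm (by
      rintro ⟨z, hz⟩
      have hz' : ‖z‖ ≠ 0 := norm_ne_zero_iff.2 hz
      simp only [hg, homeomorphUnitSphereProd_apply_snd_coe,
        homeomorphUnitSphereProd_apply_fst_coe, hrad]
      rw [← ENNReal.ofReal_mul (sq_nonneg _), real_inner_smul_left]
      congr 1
      field_simp)
  have h2 := lintegral_polar_mul (fun z => ENNReal.ofReal (‖z‖ ^ 2 * ω z ^ 2))
    (fun _ => 1) g (by omega) measurable_const hgm (by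
      rintro ⟨z, hz⟩
      simp only [hg, homeomorphUnitSphereProd_apply_snd_coe, hrad, one_mul])
  rw [hω.norm, lintegral_const, one_mul] at h2
  rw [hrot, h1]
  set S := (volume : Measure (EuclideanSpace ℝ (Fin n))).toSphere Set.univ with hS
  have hS0 : S ≠ 0 := by
    rw [hS, Ne, Measure.measure_univ_eq_zero]; exact Measure.toSphere_ne_zero _
  have hSt : S ≠ ⊤ := measure_ne_top _ _
  calc _ = K2 n e * (S * ∫⁻ r, g r ∂(Measure.volumeIoiPow
          (Module.finrank ℝ (EuclideanSpace ℝ (Fin n)) - 1))) := by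
        rw [K2, ← mul_assoc, ENNReal.div_mul_cancel hS0 hSt]
    _ ≤ 1 := by rw [← h2]; exact ENNReal.mul_inv_le_one _

/-- Cauchy–Schwarz for the component of the flux integrand in the direction `v`. -/
lemma lintegral_enorm_inner_le {n : ℕ} (hn : 2 ≤ n) {δ : ℝ} {e : EuclideanSpace ℝ (Fin n)}
    (he : ‖e‖ = 1) {ω : EuclideanSpace ℝ (Fin n) → ℝ} (hω : IsKernel n δ e ω)
    (D : Set (EuclideanSpace ℝ (Fin n)))
    {p : EuclideanSpace ℝ (Fin n) → ℝ} (hp : Measurable p)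
    (x v : EuclideanSpace ℝ (Fin n)) (hv : ‖v‖ = 1) :
    ∫⁻ x' in D, ‖⟪v, (p x' * ω (x - x')) • (x - x')⟫‖ₑ ≤
      (∫⁻ x' in D, ENNReal.ofReal (p x' ^ 2)) ^ (1/2 : ℝ) := by
  have hωm := hω.meas
  have hsq (a : ℝ) : ‖a‖ₑ ^ (2 : ℝ) = ENNReal.ofReal (a ^ 2) := by
    rw [Real.enorm_eq_ofReal_abs, ENNReal.ofReal_rpow_of_nonneg (abs_nonneg _) (by norm_num)]
    norm_num
  have hm : Measurable fun x' => ⟪x - x', v⟫ * ω (x - x') := by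
    have : Measurable fun x' => ω (x - x') := hωm.comp (measurable_const.sub measurable_id)
    have h2 : Measurable fun x' : EuclideanSpace ℝ (Fin n) => ⟪x - x', v⟫ := by fun_prop
    exact h2.mul this
  have hker : ∫⁻ x' in D, ‖⟪x - x', v⟫ * ω (x - x')‖ₑ ^ (2 : ℝ) ≤ 1 := by
    refine (setLIntegral_le_lintegral _ _).trans ?_
    simp_rw [hsq, mul_pow]
    rw [lintegral_sub_left_eq_self (fun z => ENNReal.ofReal (⟪z, v⟫ ^ 2 * ω z ^ 2)) x]
    exact lintegral_inner_sq_le_one hn he hω v hv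
  calc _ = ∫⁻ x' in D, ((fun x' => ‖p x'‖ₑ) * fun x' => ‖⟪x - x', v⟫ * ω (x - x')‖ₑ) x' := by
        refine lintegral_congr fun x' => ?_
        rw [Pi.mul_apply, ← enorm_mul, real_inner_smul_right, real_inner_comm]
        congr 1; ring
    _ ≤ _ := ENNReal.lintegral_mul_le_Lp_mul_Lq _ Real.HolderConjugate.two_two
        hp.enorm.aemeasurable hm.enorm.aemeasurable
    _ ≤ (∫⁻ x' in D, ENNReal.ofReal (p x' ^ 2)) ^ (1/2 : ℝ) * 1 := by
        simp_rw [hsq (p _)]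
        gcongr
        exact ENNReal.rpow_le_one hker (by norm_num)
    _ = _ := mul_one _

/-- The flux recovery operator `R_δ` is a well-defined bounded linear map
from `L^{1,2}(Ω_δ×Ω_δ)` to `L¹(Ω_δ;ℝⁿ)` with norm at most one. -/
theorem stmt15 {n : ℕ} (hn : 2 ≤ n) (Ω : Set (EuclideanSpace ℝ (Fin n)))
    (hΩo : IsOpen Ω) (hΩb : Bornology.IsBounded Ω)
    (δ : ℝ) (hδ : 0 < δ) (e : EuclideanSpace ℝ (Fin n)) (he : ‖e‖ = 1)
    (ω : EuclideanSpace ℝ (Fin n) → ℝ) (hω : IsKernel n δ e ω)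
    (q : EuclideanSpace ℝ (Fin n) → EuclideanSpace ℝ (Fin n) → ℝ)
    (hqm : Measurable (Function.uncurry q))
    (hqfin : N12 (thickening δ Ω) q < ⊤) :
    (∀ᵐ x ∂(volume.restrict (thickening δ Ω)),
      IntegrableOn (fun x' => (q x x' * ω (x - x')) • (x - x')) (thickening δ Ω) volume) ∧
    IntegrableOn (Rdelta (thickening δ Ω) ω q) (thickening δ Ω) volume ∧
    ENNReal.ofReal (∫ x in thickening δ Ω, ‖Rdelta (thickening δ Ω) ω q x‖) ≤
      N12 (thickening δ Ω) q := by
  set D := thickening δ Ω with hD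
  have hωm := hω.meas
  have hmeas2 : Measurable (Function.uncurry fun x x' : EuclideanSpace ℝ (Fin n) =>
      (q x x' * ω (x - x')) • (x - x')) := by
    have h1 : Measurable fun z : EuclideanSpace ℝ (Fin n) × EuclideanSpace ℝ (Fin n) =>
        ω (z.1 - z.2) := hωm.comp (measurable_fst.sub measurable_snd)
    exact (hqm.mul h1).smul (measurable_fst.sub measurable_snd)
  have hqx (x) : Measurable (q x) := hqm.comp measurable_prodMk_left
  have hint : ∀ᵐ x ∂(volume.restrict D),
      IntegrableOn (fun x' => (q x x' * ω (x - x')) • (x - x')) D volume := by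
    have hm : Measurable fun x => (∫⁻ x' in D, ENNReal.ofReal (q x x' ^ 2)) ^ (1/2 : ℝ) :=
      (Measurable.lintegral_prod_right' (f := fun z : EuclideanSpace ℝ (Fin n) ×
        EuclideanSpace ℝ (Fin n) => ENNReal.ofReal (q z.1 z.2 ^ 2))
        (hqm.pow_const 2).ennreal_ofReal).pow_const _
    filter_upwards [ae_lt_top hm hqfin.ne] with x hx
    have hmx : Measurable fun x' => (q x x' * ω (x - x')) • (x - x') :=
      hmeas2.comp measurable_prodMk_left
    -- the integrand is integrable because each of its components in an orthonormal basis is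
    have hsum : (fun x' => (q x x' * ω (x - x')) • (x - x')) = fun x' =>
        ∑ i, ⟪EuclideanSpace.basisFun (Fin n) ℝ i, (q x x' * ω (x - x')) • (x - x')⟫ •
          EuclideanSpace.basisFun (Fin n) ℝ i :=
      funext fun x' => ((EuclideanSpace.basisFun (Fin n) ℝ).sum_repr' _).symm
    rw [hsum]
    refine integrable_finsetSum _ fun i _ => Integrable.smul_const ⟨?_, ?_⟩ _
    · exact (measurable_const.inner hmx).aestronglyMeasurable
    · exact (lintegral_enorm_inner_le hn he hω D (hqx x) x _
        ((EuclideanSpace.basisFun (Fin n) ℝ).norm_eq_one i)).trans_lt hx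
  have hbound : ∀ᵐ x ∂(volume.restrict D), ‖Rdelta D ω q x‖ₑ ≤
      (∫⁻ x' in D, ENNReal.ofReal (q x x' ^ 2)) ^ (1/2 : ℝ) := by
    filter_upwards [hint] with x hx
    rcases eq_or_ne (Rdelta D ω q x) 0 with h0 | h0
    · simp [h0]
    -- test the flux against its own direction
    set v := (‖Rdelta D ω q x‖)⁻¹ • Rdelta D ω q x with hv
    have hv1 : ‖v‖ = 1 := norm_smul_inv_norm (𝕜 := ℝ) h0
    have hvR : ⟪v, Rdelta D ω q x⟫ = ‖Rdelta D ω q x‖ := by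
      have : ‖Rdelta D ω q x‖ ≠ 0 := norm_ne_zero_iff.2 h0
      rw [hv, real_inner_smul_left, real_inner_self_eq_norm_sq]
      field_simp
    calc ‖Rdelta D ω q x‖ₑ = ‖∫ x' in D, ⟪v, (q x x' * ω (x - x')) • (x - x')⟫‖ₑ := by
          rw [integral_inner hx v]
          change _ = ‖⟪v, Rdelta D ω q x⟫‖ₑ
          rw [hvR, enorm_norm]
      _ ≤ _ := enorm_integral_le_lintegral_enorm _
      _ ≤ _ := lintegral_enorm_inner_le hn he hω D (hqx x) x v hv1
  have hle : ∫⁻ x in D, ‖Rdelta D ω q x‖ₑ ≤ N12 D q := lintegral_mono_ae hbound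
  have hRm : StronglyMeasurable (Rdelta D ω q) :=
    StronglyMeasurable.integral_prod_right hmeas2.stronglyMeasurable
  refine ⟨hint, ⟨hRm.aestronglyMeasurable, hle.trans_lt hqfin⟩, ?_⟩
  rw [integral_norm_eq_lintegral_enorm hRm.aestronglyMeasurable]
  exact ENNReal.ofReal_toReal_le.trans hle
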